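/- arXiv:2404.11344 — 2 statements merged into one kernel-verified Lean document; each statement's English description precedes it below -/
import Mathlib

section
/- Let N be a natural number and r : Fin N → Fin N → Prop a relation (a set of design inequalities). Let L be the number of permutations σ : Fin N ≃ Fin N such that σ j < σ i whenever r i j (the number of total orders, or linear extensions, consistent with the inequalities). Then the Lebesgue volume of the set { x : Fin N → ℝ | (∀ i, 0 ≤ x i ∧ x i ≤ 1) ∧ (∀ i j, r i j → x j < x i) } equals L / N!. (The fractional volume in design space of a set of design inequalities equals its number of consistent total orders divided by N factorial.) -/
open MeasureTheory

/-- The part of the unit cube on which the coordinates are ordered according to `σ`. -/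
def chamber {N : ℕ} (σ : Equiv.Perm (Fin N)) : Set (Fin N → ℝ) :=
  {x | (∀ i, 0 ≤ x i ∧ x i ≤ 1) ∧ ∀ i j, σ i < σ j → x i < x j}

lemma chamber_strictMono {N : ℕ} {σ : Equiv.Perm (Fin N)} {x : Fin N → ℝ}
    (hx : x ∈ chamber σ) : StrictMono (x ∘ σ.symm) := by
  intro a b hab
  exact hx.2 _ _ (by simpa using hab)

lemma chamber_measurable {N : ℕ} (σ : Equiv.Perm (Fin N)) : MeasurableSet (chamber σ) := by
  unfold chamber
  simp only [Set.setOf_and, Set.setOf_forall]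
  refine MeasurableSet.inter (MeasurableSet.iInter fun i => MeasurableSet.inter ?_ ?_)
    (MeasurableSet.iInter fun i => MeasurableSet.iInter fun j => MeasurableSet.iInter fun _ => ?_)
  · exact measurableSet_le measurable_const (measurable_pi_apply i)
  · exact measurableSet_le (measurable_pi_apply i) measurable_const
  · exact measurableSet_lt (measurable_pi_apply i) (measurable_pi_apply j)

lemma chamber_volume {N : ℕ} (σ : Equiv.Perm (Fin N)) :
    volume (chamber σ) = volume (chamber (1 : Equiv.Perm (Fin N))) := by
  have h := (volume_measurePreserving_piCongrLeft (fun _ : Fin N => ℝ) σ).measure_preimage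
    (chamber_measurable (1 : Equiv.Perm (Fin N))).nullMeasurableSet
  rw [← h]
  congr 1
  ext x
  have key : ∀ i, (MeasurableEquiv.piCongrLeft (fun _ : Fin N => ℝ) σ) x (σ i) = x i := by
    intro i
    exact Equiv.piCongrLeft_apply_apply (fun _ : Fin N => ℝ) σ x i
  simp only [chamber, Set.mem_preimage, Set.mem_setOf_eq, Equiv.Perm.coe_one, id]
  constructor
  · rintro ⟨h1, h2⟩
    refine ⟨fun i => ?_, fun i j hij => ?_⟩
    · obtain ⟨i, rfl⟩ := σ.surjective i
      rw [key]; exact h1 i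
    · obtain ⟨i, rfl⟩ := σ.surjective i
      obtain ⟨j, rfl⟩ := σ.surjective j
      rw [key, key]; exact h2 i j hij
  · rintro ⟨h1, h2⟩
    refine ⟨fun i => ?_, fun i j hij => ?_⟩
    · rw [← key]; exact h1 _
    · rw [← key i, ← key j]; exact h2 _ _ hij

lemma chamber_disjoint {N : ℕ} {σ τ : Equiv.Perm (Fin N)} (h : σ ≠ τ) :
    Disjoint (chamber σ) (chamber τ) := by
  rw [Set.disjoint_left]
  intro x hx hy
  have h1 := chamber_strictMono hx
  have h2 := chamber_strictMono hy
  have h3 := Tuple.unique_monotone h1.monotone h2.monotone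
  have hinj : Function.Injective x := by
    intro a b hab
    apply σ.injective
    apply h1.injective
    simpa using hab
  apply h
  apply Equiv.symm_bijective.injective
  ext1 a
  exact hinj (congrFun h3 a)

lemma ae_inj (N : ℕ) : ∀ᵐ x : Fin N → ℝ, Function.Injective x := by
  have : ∀ᵐ x : Fin N → ℝ, ∀ i j : Fin N, i ≠ j → x i ≠ x j := by
    rw [ae_all_iff]; intro i
    rw [ae_all_iff]; intro j
    by_cases hij : i = j
    · simp [hij]
    let s : Submodule ℝ (Fin N → ℝ) :=
      LinearMap.ker ((LinearMap.proj i : (Fin N → ℝ) →ₗ[ℝ] ℝ) - (LinearMap.proj j : (Fin N → ℝ) →ₗ[ℝ] ℝ))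
    have hs : s ≠ ⊤ := by
      intro h
      have : (Pi.single i 1 : Fin N → ℝ) ∈ s := by rw [h]; trivial
      simp [s, Pi.single_apply, Ne.symm hij] at this
    have h0 := Measure.addHaar_submodule (volume : Measure (Fin N → ℝ)) s hs
    filter_upwards [measure_eq_zero_iff_ae_notMem.1 h0] with x hx _ he
    apply hx
    simp [s, he]
  filter_upwards [this] with x hx a b hab
  by_contra h
  exact hx a b h hab

lemma volume_eq_card_mul (N : ℕ) (r : Fin N → Fin N → Prop) :
    volume {x : Fin N → ℝ |
        (∀ i, 0 ≤ x i ∧ x i ≤ 1) ∧ ∀ i j, r i j → x j < x i}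
      = (Nat.card {σ : Equiv.Perm (Fin N) // ∀ i j, r i j → σ j < σ i} : ENNReal)
          * volume (chamber (1 : Equiv.Perm (Fin N))) := by
  classical
  have h1 : volume {x : Fin N → ℝ |
        (∀ i, 0 ≤ x i ∧ x i ≤ 1) ∧ ∀ i j, r i j → x j < x i}
      = volume (⋃ σ : {σ : Equiv.Perm (Fin N) // ∀ i j, r i j → σ j < σ i}, chamber σ.1) := by
    apply measure_congr
    rw [Filter.eventuallyEq_set]
    filter_upwards [ae_inj N] with x hx
    simp only [Set.mem_iUnion, Set.mem_setOf_eq]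
    constructor
    · rintro ⟨hc, hr⟩
      have hm : StrictMono (x ∘ Tuple.sort x) :=
        (Tuple.monotone_sort x).strictMono_of_injective (hx.comp (Tuple.sort x).injective)
      have hlt : ∀ i j, (Tuple.sort x).symm i < (Tuple.sort x).symm j ↔ x i < x j := by
        intro i j
        rw [← hm.lt_iff_lt]; simp
      exact ⟨⟨(Tuple.sort x).symm, fun i j h => (hlt _ _).2 (hr i j h)⟩, hc,
        fun i j h => (hlt _ _).1 h⟩
    · rintro ⟨σ, hσ⟩
      exact ⟨hσ.1, fun i j h => hσ.2 _ _ (σ.2 i j h)⟩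
  rw [h1, measure_iUnion (fun a b hab => chamber_disjoint (fun h => hab (Subtype.ext h)))
    (fun σ => chamber_measurable σ.1), tsum_fintype]
  simp [chamber_volume, Nat.card_eq_fintype_card]

/-- The fractional volume in design space of a set of design inequalities equals its
number of consistent total orders (linear extensions) divided by `N!`. -/
theorem volume_eq_linear_extensions_div_factorial (N : ℕ) (r : Fin N → Fin N → Prop) :
    volume {x : Fin N → ℝ |
        (∀ i, 0 ≤ x i ∧ x i ≤ 1) ∧ ∀ i j, r i j → x j < x i}
      = (Nat.card {σ : Equiv.Perm (Fin N) // ∀ i j, r i j → σ j < σ i} : ENNReal)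
          / (Nat.factorial N : ENNReal) := by
  have hcube : volume {x : Fin N → ℝ |
        (∀ i, 0 ≤ x i ∧ x i ≤ 1) ∧ ∀ i j : Fin N, False → x j < x i} = 1 := by
    have : {x : Fin N → ℝ | (∀ i, 0 ≤ x i ∧ x i ≤ 1) ∧ ∀ i j : Fin N, False → x j < x i}
        = Set.Icc (0 : Fin N → ℝ) 1 := by
      ext x
      simp [Pi.le_def, forall_and]
    rw [this, Real.volume_Icc_pi]
    simp
  have hcard : Nat.card {σ : Equiv.Perm (Fin N) // ∀ i j : Fin N, False → σ j < σ i}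
      = N.factorial := by
    rw [Nat.card_congr (Equiv.subtypeUnivEquiv (fun σ i j h => h.elim)),
      Nat.card_eq_fintype_card, Fintype.card_perm, Fintype.card_fin]
  have h := volume_eq_card_mul N (fun _ _ => False)
  rw [hcube, hcard] at h
  rw [volume_eq_card_mul, div_eq_mul_inv]
  congr 1
  exact ENNReal.eq_inv_of_mul_eq_one_left (by rw [mul_comm]; exact h.symm)
end

section
/- Let N, k be natural numbers and let a, b : Fin k → Fin N be such that the 2k values a 0, …, a (k−1), b 0, …, b (k−1) are pairwise distinct. Then the number of permutations σ : Fin N ≃ Fin N satisfying σ (a i) < σ (b i) for every i : Fin k, multiplied by 2^k, equals N!. (Imposing k independent pairwise inequalities on disjoint pairs of switching fields reduces the number of total orders by a factor 2^k.) -/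
theorem card_perms_aux (N k : ℕ) (a b : Fin k → Fin N)
    (hdist : Function.Injective (Sum.elim a b : Fin k ⊕ Fin k → Fin N)) (S : Finset (Fin k)) :
    (Finset.univ.filter (fun σ : Equiv.Perm (Fin N) => ∀ i ∈ S, σ (a i) < σ (b i))).card
      * 2 ^ S.card = Nat.factorial N := by
  have hab : ∀ i j, a i ≠ b j := fun i j h => by
    have := @hdist (Sum.inl i) (Sum.inr j) h
    simp at this
  have ha : ∀ i j, i ≠ j → a i ≠ a j := fun i j hij h => by
    have := @hdist (Sum.inl i) (Sum.inl j) h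
    exact hij (by simpa using this)
  have hb : ∀ i j, i ≠ j → b i ≠ b j := fun i j hij h => by
    have := @hdist (Sum.inr i) (Sum.inr j) h
    exact hij (by simpa using this)
  induction S using Finset.induction_on with
  | empty => simp [Fintype.card_perm]
  | insert j S hj ih =>
    rw [← ih, Finset.card_insert_of_notMem hj, pow_succ']
    rw [← Finset.card_filter_add_card_filter_not
      (s := Finset.univ.filter (fun σ : Equiv.Perm (Fin N) => ∀ i ∈ S, σ (a i) < σ (b i)))
      (fun σ : Equiv.Perm (Fin N) => σ (a j) < σ (b j))]
    have h1 : (Finset.univ.filter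
        (fun σ : Equiv.Perm (Fin N) => ∀ i ∈ insert j S, σ (a i) < σ (b i))) =
        (Finset.univ.filter (fun σ : Equiv.Perm (Fin N) => ∀ i ∈ S, σ (a i) < σ (b i))).filter
          (fun σ : Equiv.Perm (Fin N) => σ (a j) < σ (b j)) := by
      ext σ
      simp [Finset.forall_mem_insert, and_comm]
    have key : ∀ σ : Equiv.Perm (Fin N), (∀ i ∈ S, σ (a i) < σ (b i)) →
        ∀ i ∈ S, (σ * Equiv.swap (a j) (b j)) (a i) < (σ * Equiv.swap (a j) (b j)) (b i) := by
      intro σ h i hi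
      have hij : i ≠ j := fun e => hj (e ▸ hi)
      rw [Equiv.Perm.mul_apply, Equiv.Perm.mul_apply,
        Equiv.swap_apply_of_ne_of_ne (ha i j hij) (hab i j),
        Equiv.swap_apply_of_ne_of_ne (hab j i).symm (hb i j hij)]
      exact h i hi
    have h2 : ((Finset.univ.filter
          (fun σ : Equiv.Perm (Fin N) => ∀ i ∈ S, σ (a i) < σ (b i))).filter
          (fun σ : Equiv.Perm (Fin N) => σ (a j) < σ (b j))).card =
        ((Finset.univ.filter
          (fun σ : Equiv.Perm (Fin N) => ∀ i ∈ S, σ (a i) < σ (b i))).filter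
          (fun σ : Equiv.Perm (Fin N) => ¬ σ (a j) < σ (b j))).card := by
      apply Finset.card_bij' (fun σ _ => σ * Equiv.swap (a j) (b j))
        (fun σ _ => σ * Equiv.swap (a j) (b j))
      · intro σ h
        simp only [Finset.mem_filter, Finset.mem_univ, true_and] at h ⊢
        refine ⟨key σ h.1, ?_⟩
        simpa using h.2.le
      · intro σ h
        simp only [Finset.mem_filter, Finset.mem_univ, true_and] at h ⊢
        refine ⟨key σ h.1, ?_⟩
        have hne : σ (b j) ≠ σ (a j) := fun e => hab j j (σ.injective e).symm
        simpa using lt_of_le_of_ne (not_lt.mp h.2) hne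
      · intro σ _
        simp [mul_assoc]
      · intro σ _
        simp [mul_assoc]
    rw [h1, ← h2]
    ring


/-- Imposing `k` independent pairwise inequalities on disjoint pairs of switching fields
reduces the number of total orders by a factor `2^k`. -/
theorem card_perms_with_disjoint_pairwise_inequalities (N k : ℕ)
    (a b : Fin k → Fin N)
    (hdist : Function.Injective (Sum.elim a b : Fin k ⊕ Fin k → Fin N)) :
    Nat.card {σ : Equiv.Perm (Fin N) // ∀ i : Fin k, σ (a i) < σ (b i)} * 2 ^ k
      = Nat.factorial N := by
  have h := card_perms_aux N k a b hdist Finset.univ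
  simp only [Finset.mem_univ, true_imp_iff, Finset.card_univ, Fintype.card_fin] at h
  rw [Nat.card_eq_fintype_card, Fintype.card_subtype]
  exact h
end
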